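/- Let n ≥ 2, α_n = 1/2 − 1/(2n), ψ ∈ L²(Ω, z dμ) supported in ℝⁿ × (0,1], and define μ ∈ 𝒮'(ℝⁿ) by μ̂(ξ) = |ξ|^{1/(n−1)} λ̂(ξ) where λ̂(ξ) = |ξ|² ∫_0^∞ s ψ̂(ξ,s) u₁(s|ξ|^{1/α_n}) ds and u₁(z) = (1/α_n) K_0(z^{α_n}/α_n). Then μ ∈ L²(ℝⁿ), with ‖μ‖_{L²} ≤ C ‖ψ‖_{L²(Ω, z dμ)}. Consequently λ ∈ H^{1/(n−1)}(ℝⁿ). -/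

import Mathlib

open MeasureTheory
open scoped FourierTransform

/-- The modified Bessel function of the second kind of order `0`. -/
noncomputable def besselK0 (x : ℝ) : ℝ :=
  ∫ t in Set.Ioi (0 : ℝ), Real.exp (-x * Real.cosh t)

/-- `α_n = 1/2 − 1/(2n)`. -/
noncomputable def alphaN (n : ℕ) : ℝ := 1 / 2 - 1 / (2 * n)

/-- `u₁(z) = (1/α_n) K₀(z^{α_n}/α_n)`. -/
noncomputable def taubU1 (n : ℕ) (z : ℝ) : ℝ :=
  (1 / alphaN n) * besselK0 (z ^ alphaN n / alphaN n)


section aux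
variable {V : Type*} [NormedAddCommGroup V] [InnerProductSpace ℝ V] [FiniteDimensional ℝ V]
  [MeasurableSpace V] [BorelSpace V]

theorem aux_fourier_of_not {f : V → ℂ} (hf : ¬ Integrable f) : 𝓕 f = 0 := by
  ext ξ
  rw [Real.fourier_eq]
  apply integral_undef
  intro h
  exact hf ((Real.fourierIntegral_convergent_iff ξ).1 h)

theorem aux_fourier_cont (f : V → ℂ) : Continuous (𝓕 f) := by
  by_cases hf : Integrable f
  · exact VectorFourier.fourierIntegral_continuous Real.continuous_fourierChar
      (by exact continuous_inner) hf
  · rw [aux_fourier_of_not hf]; exact continuous_zero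

theorem aux_plancherel (f : V → ℂ) : ∫⁻ ξ, ‖𝓕 f ξ‖ₑ ^ 2 ≤ ∫⁻ x, ‖f x‖ₑ ^ 2 := by
  by_cases hf : Integrable f
  swap
  · rw [aux_fourier_of_not hf]; simp
  by_cases h2 : MemLp f 2
  swap
  · have : ∫⁻ x, ‖f x‖ₑ ^ 2 = ⊤ := by
      by_contra h
      apply h2
      refine ⟨hf.1, ?_⟩
      rw [eLpNorm_lt_top_iff_lintegral_rpow_enorm_lt_top (by norm_num) (by norm_num)]
      simpa using lt_top_iff_ne_top.2 h
    rw [this]; exact le_top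
  have key : ∀ᵐ x, (𝓕 (h2.toLp f) : Lp (α := V) ℂ 2 volume) x = 𝓕 f x := by
    apply ae_eq_of_integral_contDiff_smul_eq
    · exact (Lp.memLp _).locallyIntegrable (by norm_num)
    · exact (aux_fourier_cont f).locallyIntegrable
    · intro g g_smooth g_cpt
      have hg₁ : HasCompactSupport (Complex.ofRealCLM ∘ g) := g_cpt.comp_left rfl
      have hg₂ : ContDiff ℝ (⊤ : ℕ∞) (Complex.ofRealCLM ∘ g) := by fun_prop
      set G := hg₁.toSchwartzMap hg₂ with hG
      have hGx : ∀ x, G x = (g x : ℂ) := fun x => by simp [hG]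
      have e1 := congrArg (fun T => T G) (Lp.fourier_toTemperedDistribution_eq (h2.toLp f))
      simp only [TemperedDistribution.fourier_apply, Lp.toTemperedDistribution_apply] at e1
      have e2 : ∫ x, (𝓕 G) x • (h2.toLp f) x = ∫ x, (𝓕 G) x • f x := by
        apply integral_congr_ae
        filter_upwards [h2.coeFn_toLp] with x hx
        rw [hx]
      have e3 : ∫ ξ, (𝓕 (G : V → ℂ)) ξ • f ξ = ∫ x, G x • 𝓕 f x := by
        simpa using! VectorFourier.integral_bilin_fourierIntegral_eq_flip
          (ContinuousLinearMap.lsmul ℂ ℂ) (L := innerₗ V)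
          Real.continuous_fourierChar continuous_inner G.integrable hf
      rw [← SchwartzMap.fourier_coe] at e3
      have e4 := e1.symm.trans (e2.trans e3)
      simpa [hGx] using e4
  have hn := Lp.norm_fourier_eq (h2.toLp f)
  have hn' : eLpNorm (𝓕 f) 2 volume = eLpNorm f 2 volume := by
    rw [← eLpNorm_congr_ae key, ← eLpNorm_congr_ae h2.coeFn_toLp]
    rw [Lp.norm_def, Lp.norm_def, ENNReal.toReal_eq_toReal_iff' (Lp.eLpNorm_ne_top _) (Lp.eLpNorm_ne_top _)] at hn
    exact hn
  have conv : ∀ h : V → ℂ, ∫⁻ x, ‖h x‖ₑ ^ 2 = eLpNorm h 2 volume ^ (2:ℕ) := by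
    intro h
    have := eLpNorm_nnreal_pow_eq_lintegral (f := h) (μ := volume) (p := 2) (by norm_num)
    simpa using this.symm
  rw [conv, conv, hn']

theorem aux_tonelli (E : Set V) (hE : MeasurableSet E) (ν : Measure ℝ) [SFinite ν]
    (u : V → ℝ → ℂ) (hc : ∀ s, Continuous fun ξ => u ξ s)
    (hm : ∀ ξ ∈ E, AEMeasurable (u ξ) ν) (w : ℝ → ENNReal) (hw : Measurable w)
    (hwt : ∀ s, w s ≠ ⊤) :
    ∫⁻ ξ in E, ∫⁻ s, w s * ‖u ξ s‖ₑ ^ 2 ∂ν ≤ ∫⁻ s, w s * (∫⁻ ξ, ‖u ξ s‖ₑ ^ 2) ∂ν := by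
  classical
  obtain ⟨D, hDc, hDd⟩ := TopologicalSpace.exists_countable_dense E
  have : Countable D := hDc.to_subtype
  have hae : ∀ᵐ s ∂ν, ∀ d : D, u d.1.1 s = (hm d.1.1 d.1.2).mk _ s :=
    ae_all_iff.2 fun d => (hm d.1.1 d.1.2).ae_eq_mk
  obtain ⟨N, hNsub, hNm, hN0⟩ := exists_measurable_superset_of_null (ae_iff.1 hae)
  let v : E → ℝ → ℂ := fun ξ s => if s ∈ N then 0 else u ξ s
  have hvc : ∀ s, Continuous fun ξ => v ξ s := by
    intro s
    by_cases h : s ∈ N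
    · simp only [v, h, if_true]; exact continuous_const
    · simp only [v, h, if_false]; exact (hc s).comp continuous_subtype_val
  have hvD : ∀ d ∈ D, Measurable (v d) := by
    intro d hd
    have : v d = fun s => if s ∈ N then 0 else (hm d.1 d.2).mk _ s := by
      ext s
      by_cases h : s ∈ N
      · simp [v, h]
      · simp only [v, h, if_false]
        have : s ∉ {a | ¬ ∀ d : D, u d.1.1 a = (hm d.1.1 d.1.2).mk _ a} := fun hh => h (hNsub hh)
        simp only [Set.mem_ofPred_eq, not_not] at this
        exact this ⟨d, hd⟩
    rw [this]
    exact Measurable.ite hNm measurable_const (hm d.1 d.2).measurable_mk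
  have hvm : ∀ ξ, Measurable (v ξ) := by
    intro ξ
    obtain ⟨x, hx, hxl⟩ := mem_closure_iff_seq_limit.1 (hDd ξ)
    refine measurable_of_tendsto_metrizable (f := fun k => v (x k)) (fun k => hvD _ (hx k)) ?_
    rw [tendsto_pi_nhds]
    intro s
    exact ((hvc s).tendsto ξ).comp hxl
  have hvu : Measurable (Function.uncurry v) :=
    measurable_uncurry_of_continuous_of_measurable hvc hvm
  have hN : ∀ᵐ s ∂ν, s ∉ N := measure_eq_zero_iff_ae_notMem.1 hN0
  let m : Measure E := volume.comap Subtype.val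
  have : SigmaFinite m := by
    refine ⟨⟨{ set := fun i => Subtype.val ⁻¹' spanningSets (volume : Measure V) i
               set_mem := fun _ => trivial
               finite := fun i => ?_
               spanning := ?_ }⟩⟩
    · rw [(MeasurableEmbedding.subtype_coe hE).comap_apply]
      exact (measure_mono (Set.image_preimage_subset _ _)).trans_lt
        (measure_spanningSets_lt_top _ i)
    · rw [← Set.preimage_iUnion, iUnion_spanningSets, Set.preimage_univ]
  calc ∫⁻ ξ in E, ∫⁻ s, w s * ‖u ξ s‖ₑ ^ 2 ∂ν
      = ∫⁻ ξ : E, ∫⁻ s, w s * ‖u ξ s‖ₑ ^ 2 ∂ν ∂m :=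
        (lintegral_subtype_comap hE (fun ξ => ∫⁻ s, w s * ‖u ξ s‖ₑ ^ 2 ∂ν)).symm
    _ = ∫⁻ ξ : E, ∫⁻ s, w s * ‖v ξ s‖ₑ ^ 2 ∂ν ∂m := by
        congr 1; ext ξ
        apply lintegral_congr_ae
        filter_upwards [hN] with s hs
        simp [v, hs]
    _ = ∫⁻ s, ∫⁻ ξ : E, w s * ‖v ξ s‖ₑ ^ 2 ∂m ∂ν := by
        apply lintegral_lintegral_swap
        apply Measurable.aemeasurable
        have h1 : Measurable fun p : E × ℝ => v p.1 p.2 := hvu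
        exact (hw.comp measurable_snd).mul (h1.enorm.pow_const 2)
    _ = ∫⁻ s, ∫⁻ ξ : E, w s * ‖u ξ s‖ₑ ^ 2 ∂m ∂ν := by
        apply lintegral_congr_ae
        filter_upwards [hN] with s hs
        simp [v, hs]
    _ ≤ _ := by
        apply lintegral_mono
        intro s
        dsimp only
        rw [lintegral_const_mul' _ _ (hwt s), lintegral_subtype_comap hE (fun ξ => ‖u ξ s‖ₑ ^ 2)]
        gcongr
        exact Measure.restrict_le_self
end aux

theorem aux_cs {ν : Measure ℝ} {f g : ℝ → ENNReal} (hf : AEMeasurable f ν)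
    (hg : AEMeasurable g ν) :
    (∫⁻ s, f s * g s ∂ν) ^ 2 ≤ (∫⁻ s, f s ^ 2 ∂ν) * ∫⁻ s, g s ^ 2 ∂ν := by
  have h := ENNReal.lintegral_mul_le_Lp_mul_Lq ν (p := 2) (q := 2)
    (Real.holderConjugate_iff.2 (by norm_num)) hf hg
  have h2 := pow_le_pow_left' h 2
  simp only [Pi.mul_apply, mul_pow] at h2
  rw [← ENNReal.rpow_mul_natCast, ← ENNReal.rpow_mul_natCast] at h2
  simpa using h2

theorem aux_K0_meas : Measurable besselK0 := by
  have : StronglyMeasurable (Function.uncurry fun x t : ℝ => Real.exp (-x * Real.cosh t)) := by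
    apply Continuous.stronglyMeasurable
    unfold Function.uncurry
    fun_prop
  exact (this.integral_prod_right (ν := volume.restrict (Set.Ioi 0))).measurable

theorem aux_exp {p y : ℝ} (hp : 0 < p) (hy : 0 < y) : Real.exp (-y) ≤ p ^ p * y ^ (-p) := by
  have h1 : y ^ p ≤ p ^ p * Real.exp y := by
    have h2 : y / p ≤ Real.exp (y / p) := by linarith [Real.add_one_le_exp (y / p)]
    have h3 : (y / p) ^ p ≤ Real.exp (y / p) ^ p :=
      Real.rpow_le_rpow (by positivity) h2 hp.le
    rw [← Real.exp_mul, div_mul_cancel₀ _ hp.ne', Real.div_rpow hy.le hp.le,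
      div_le_iff₀ (by positivity)] at h3
    linarith
  rw [Real.exp_neg, Real.rpow_neg hy.le, inv_eq_one_div, ← div_eq_mul_inv,
    div_le_div_iff₀ (Real.exp_pos _) (by positivity)]
  linarith

theorem aux_K0 {p : ℝ} (hp : 0 < p) :
    ∃ M > 0, ∀ x > 0, 0 < besselK0 x ∧ besselK0 x ≤ M * x ^ (-p) := by
  have hint : IntegrableOn (fun t : ℝ => Real.exp (-p * t)) (Set.Ioi 0) :=
    integrableOn_exp_mul_Ioi (by linarith) 0
  have bd : ∀ x > 0, ∀ t : ℝ, Real.exp (-x * Real.cosh t)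
      ≤ p ^ p * 2 ^ p * x ^ (-p) * Real.exp (-p * t) := by
    intro x hx t
    have hc : 0 < Real.cosh t := Real.cosh_pos t
    have h1 := aux_exp hp (mul_pos hx hc)
    have h2 : Real.exp t / 2 ≤ Real.cosh t := by
      rw [Real.cosh_eq]; have := Real.exp_pos (-t); linarith
    have h3 : Real.cosh t ^ (-p) ≤ (Real.exp t / 2) ^ (-p) :=
      Real.rpow_le_rpow_of_nonpos (by positivity) h2 (by linarith)
    have h4 : (Real.exp t / 2) ^ (-p) = 2 ^ p * Real.exp (-p * t) := by
      rw [Real.div_rpow (Real.exp_pos _).le (by norm_num), ← Real.exp_mul,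
        Real.rpow_neg (by norm_num : (0:ℝ) ≤ 2)]
      field_simp
    rw [neg_mul]
    refine h1.trans ?_
    rw [Real.mul_rpow hx.le hc.le]
    rw [h4] at h3
    calc p ^ p * (x ^ (-p) * Real.cosh t ^ (-p))
        ≤ p ^ p * (x ^ (-p) * (2 ^ p * Real.exp (-p * t))) := by gcongr
      _ = _ := by ring
  have hI : ∀ x > 0, IntegrableOn (fun t => Real.exp (-x * Real.cosh t)) (Set.Ioi 0) := by
    intro x hx
    refine (hint.const_mul (p ^ p * 2 ^ p * x ^ (-p))).mono' ?_ ?_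
    · exact Continuous.aestronglyMeasurable (by fun_prop)
    · refine Filter.Eventually.of_forall fun t => ?_
      rw [Real.norm_of_nonneg (Real.exp_pos _).le]
      exact bd x hx t
  have hpos : ∀ f : ℝ → ℝ, (∀ t, 0 < f t) → IntegrableOn f (Set.Ioi 0) →
      0 < ∫ t in Set.Ioi 0, f t := by
    intro f hf hfi
    rw [setIntegral_pos_iff_support_of_nonneg_ae
      (Filter.Eventually.of_forall fun t => (hf t).le) hfi]
    have : Function.support f = Set.univ := by
      ext t; simp [(hf t).ne']
    simp [this]
  refine ⟨p ^ p * 2 ^ p * ∫ t in Set.Ioi 0, Real.exp (-p * t), ?_, fun x hx => ⟨?_, ?_⟩⟩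
  · have := hpos _ (fun t => Real.exp_pos (-p * t)) hint
    positivity
  · exact hpos _ (fun t => Real.exp_pos _) (hI x hx)
  · calc besselK0 x ≤ ∫ t in Set.Ioi 0, p ^ p * 2 ^ p * x ^ (-p) * Real.exp (-p * t) :=
          setIntegral_mono (hI x hx) (hint.const_mul _) (bd x hx)
      _ = _ := by rw [integral_const_mul]; ring

theorem aux_alpha {n : ℕ} (hn : 2 ≤ n) : 0 < alphaN n ∧
    alphaN n * (2 + 1 / ((n : ℝ) - 1)) = 1 - 1 / (2 * n) := by
  have h : (2:ℝ) ≤ n := by exact_mod_cast hn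
  have h1 : (n:ℝ) - 1 ≠ 0 := by linarith
  have h0 : (n:ℝ) ≠ 0 := by linarith
  unfold alphaN
  constructor
  · have : (1:ℝ) / (2 * n) < 1 / 2 := by
      apply one_div_lt_one_div_of_lt <;> linarith
    linarith
  · field_simp
    ring

theorem aux_arg {n : ℕ} (hn : 2 ≤ n) {r s : ℝ} (hr : 0 < r) (hs : 0 < s) :
    taubU1 n (s * r ^ ((1 : ℝ) / alphaN n))
      = 1 / alphaN n * besselK0 (s ^ alphaN n * r / alphaN n) := by
  have ha := (aux_alpha hn).1
  unfold taubU1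
  rw [Real.mul_rpow hs.le (by positivity), ← Real.rpow_mul hr.le, one_div_mul_cancel ha.ne',
    Real.rpow_one]

theorem aux_u {n : ℕ} (hn : 2 ≤ n) : ∃ A > 0, ∀ r > 0, ∀ s > 0,
    0 < taubU1 n (s * r ^ ((1 : ℝ) / alphaN n)) ∧
    taubU1 n (s * r ^ ((1 : ℝ) / alphaN n)) ≤
      A * r ^ (-(2 + 1 / ((n : ℝ) - 1))) * s ^ (-1 + 1 / (2 * n) : ℝ) := by
  have ⟨ha, hap⟩ := aux_alpha hn
  have h : (2:ℝ) ≤ n := by exact_mod_cast hn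
  have h1 : 0 < (n:ℝ) - 1 := by linarith
  set p := 2 + 1 / ((n : ℝ) - 1) with hp
  have hp0 : 0 < p := by positivity
  obtain ⟨M, hM, hK⟩ := aux_K0 hp0
  refine ⟨1 / alphaN n * M * (alphaN n)⁻¹ ^ (-p), by positivity, fun r hr s hs => ?_⟩
  rw [aux_arg hn hr hs]
  have hx : 0 < s ^ alphaN n * r / alphaN n := by positivity
  obtain ⟨k1, k2⟩ := hK _ hx
  refine ⟨by positivity, ?_⟩
  rw [div_eq_mul_inv (s ^ alphaN n * r) , Real.mul_rpow (by positivity) (by positivity),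
    Real.mul_rpow (by positivity) (by positivity), ← Real.rpow_mul hs.le,
    show alphaN n * -p = -1 + 1 / (2 * n) by linarith] at k2
  calc _ ≤ 1 / alphaN n * (M * (s ^ (-1 + 1 / (2 * n) : ℝ) * r ^ (-p) * (alphaN n)⁻¹ ^ (-p))) := by
        gcongr
        rw [div_eq_mul_inv]
        exact k2
    _ = _ := by ring

theorem aux_u_meas {n : ℕ} (r : ℝ) :
    Measurable fun s : ℝ => taubU1 n (s * r ^ ((1 : ℝ) / alphaN n)) := by
  unfold taubU1
  apply Measurable.const_mul
  apply aux_K0_meas.comp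
  fun_prop

/-- the weight in the Cauchy-Schwarz step -/
noncomputable def auxG (n : ℕ) : ℝ → ENNReal :=
  (Set.Ioc (0:ℝ) 1).indicator fun s => ENNReal.ofReal (s ^ (-(1/2) + 1 / (2 * n) : ℝ))

theorem auxG_meas (n : ℕ) : Measurable (auxG n) := by
  unfold auxG
  apply Measurable.indicator _ measurableSet_Ioc
  fun_prop

theorem auxG_fin {n : ℕ} (hn : 2 ≤ n) : ∫⁻ s in Set.Ioi (0:ℝ), auxG n s ^ 2 ≠ ⊤ := by
  have h : (2:ℝ) ≤ n := by exact_mod_cast hn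
  have e : ∀ s, auxG n s ^ 2 = (Set.Ioc (0:ℝ) 1).indicator
      (fun s => ENNReal.ofReal (s ^ (-1 + 1 / n : ℝ))) s := by
    intro s
    unfold auxG
    by_cases hs : s ∈ Set.Ioc (0:ℝ) 1
    · simp only [Set.indicator_of_mem hs]
      rw [← ENNReal.ofReal_pow (by have := hs.1; positivity), ← Real.rpow_mul_natCast hs.1.le]
      congr 2
      push_cast
      field_simp
    · simp [Set.indicator_of_notMem hs]
  simp only [e]
  have hi : IntegrableOn (fun s : ℝ => s ^ (-1 + 1 / n : ℝ)) (Set.Ioc 0 1) := by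
    rw [← intervalIntegrable_iff_integrableOn_Ioc_of_le zero_le_one]
    apply intervalIntegral.intervalIntegrable_rpow'
    have : (0:ℝ) < 1 / n := by positivity
    linarith
  rw [lintegral_indicator measurableSet_Ioc, Measure.restrict_restrict measurableSet_Ioc,
    Set.inter_eq_left.2 (fun s hs => hs.1)]
  exact hi.lintegral_lt_top.ne

theorem stmt9_point {n : ℕ} (hn : 2 ≤ n) {A : ℝ} (hA : 0 < A)
    (hu : ∀ r > 0, ∀ s > 0,
      0 < taubU1 n (s * r ^ ((1 : ℝ) / alphaN n)) ∧
      taubU1 n (s * r ^ ((1 : ℝ) / alphaN n)) ≤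
      A * r ^ (-(2 + 1 / ((n : ℝ) - 1))) * s ^ (-1 + 1 / (2 * n) : ℝ))
    {r : ℝ} (hr : 0 < r) (φ : ℝ → ℂ) (hφ : ∀ s, 1 < s → φ s = 0)
    (hφm : AEMeasurable φ (volume.restrict (Set.Ioi 0))) :
    ENNReal.ofReal
            (‖((r ^ ((1 : ℝ) / (n - 1)) : ℝ) : ℂ) * (r ^ 2 : ℂ) * ∫ s in Set.Ioi (0 : ℝ),
                (s : ℂ) * φ s * (taubU1 n (s * r ^ ((1 : ℝ) / alphaN n)) : ℝ)‖ ^ 2)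
      ≤ ENNReal.ofReal (A ^ 2) * (∫⁻ s in Set.Ioi (0:ℝ), auxG n s ^ 2) *
        ∫⁻ s in Set.Ioi (0:ℝ), ENNReal.ofReal s * ‖φ s‖ₑ ^ 2 := by
  set p := 2 + 1 / ((n : ℝ) - 1) with hp
  have h1 : ‖∫ s in Set.Ioi (0 : ℝ),
                (s : ℂ) * φ s * (taubU1 n (s * r ^ ((1 : ℝ) / alphaN n)) : ℝ)‖ₑ
      ≤ ENNReal.ofReal (A * r ^ (-p)) * ∫⁻ s in Set.Ioi (0:ℝ),
        (ENNReal.ofReal (s ^ (1/2:ℝ)) * ‖φ s‖ₑ) * auxG n s := by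
    refine (enorm_integral_le_lintegral_enorm _).trans ?_
    rw [← lintegral_const_mul' _ _ ENNReal.ofReal_ne_top]
    apply setLIntegral_mono_ae' measurableSet_Ioi
    refine Filter.Eventually.of_forall fun s hs => ?_
    have hs : 0 < s := hs
    by_cases hs1 : 1 < s
    · simp [hφ s hs1]
    have hg : auxG n s = ENNReal.ofReal (s ^ (-(1/2) + 1 / (2 * n) : ℝ)) := by
      unfold auxG
      rw [Set.indicator_of_mem (show s ∈ Set.Ioc (0:ℝ) 1 from ⟨hs, not_lt.1 hs1⟩)]
    obtain ⟨u1, u2⟩ := hu r hr s hs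
    rw [hg, enorm_mul, enorm_mul]
    have e1 : ‖(s:ℂ)‖ₑ = ENNReal.ofReal s := by
      rw [← ofReal_norm, Complex.norm_real, Real.norm_of_nonneg hs.le]
    have e2 : ‖((taubU1 n (s * r ^ ((1 : ℝ) / alphaN n)) : ℝ) : ℂ)‖ₑ
        ≤ ENNReal.ofReal (A * r ^ (-p) * s ^ (-1 + 1 / (2 * n) : ℝ)) := by
      rw [← ofReal_norm, Complex.norm_real, Real.norm_of_nonneg u1.le]
      exact ENNReal.ofReal_le_ofReal u2
    have e3 : s * s ^ (-1 + 1 / (2 * n) : ℝ) = s ^ (1/2:ℝ) * s ^ (-(1/2) + 1 / (2 * n) : ℝ) := by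
      rw [← Real.rpow_add hs, ← Real.rpow_one_add' hs.le]
      · congr 1; ring
      · have : (2:ℝ) ≤ n := by exact_mod_cast hn
        have : (0:ℝ) < 1 / (2 * n) := by positivity
        linarith
    calc ‖(s:ℂ)‖ₑ * ‖φ s‖ₑ * ‖((taubU1 n (s * r ^ ((1 : ℝ) / alphaN n)) : ℝ) : ℂ)‖ₑ
        ≤ ENNReal.ofReal s * ‖φ s‖ₑ *
          ENNReal.ofReal (A * r ^ (-p) * s ^ (-1 + 1 / (2 * n) : ℝ)) := by
          rw [e1]; gcongr
      _ = ENNReal.ofReal (A * r ^ (-p)) * (ENNReal.ofReal (s * s ^ (-1 + 1 / (2 * n) : ℝ)))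
            * ‖φ s‖ₑ := by
          rw [ENNReal.ofReal_mul (by positivity), ENNReal.ofReal_mul hs.le]; ring
      _ = _ := by
          rw [e3, ENNReal.ofReal_mul (p := s ^ (1/2:ℝ)) (by positivity)]; ring
  have h2 := aux_cs (ν := volume.restrict (Set.Ioi 0))
    (f := fun s => ENNReal.ofReal (s ^ (1/2:ℝ)) * ‖φ s‖ₑ) (g := auxG n)
    (by
      apply AEMeasurable.mul _ hφm.enorm
      apply Measurable.aemeasurable
      fun_prop) (auxG_meas n).aemeasurable
  have h3 : ∫⁻ s in Set.Ioi (0:ℝ), (ENNReal.ofReal (s ^ (1/2:ℝ)) * ‖φ s‖ₑ) ^ 2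
      = ∫⁻ s in Set.Ioi (0:ℝ), ENNReal.ofReal s * ‖φ s‖ₑ ^ 2 := by
    apply setLIntegral_congr_fun measurableSet_Ioi
    intro s hs
    have hs : 0 < s := hs
    dsimp only
    rw [mul_pow, ← ENNReal.ofReal_pow (by positivity), ← Real.rpow_mul_natCast hs.le]
    norm_num
  rw [h3] at h2
  set I := ∫ s in Set.Ioi (0 : ℝ),
                (s : ℂ) * φ s * (taubU1 n (s * r ^ ((1 : ℝ) / alphaN n)) : ℝ)
  have h4 : ‖((r ^ ((1 : ℝ) / (n - 1)) : ℝ) : ℂ) * (r ^ 2 : ℂ) * I‖ = r ^ p * ‖I‖ := by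
    rw [norm_mul, norm_mul, norm_pow, Complex.norm_real, Complex.norm_real,
      Real.norm_of_nonneg hr.le, Real.norm_of_nonneg (by positivity), hp, Real.rpow_add hr]
    norm_cast
    ring
  rw [h4, ENNReal.ofReal_pow (by positivity), ENNReal.ofReal_mul (by positivity),
    ofReal_norm]
  calc (ENNReal.ofReal (r ^ p) * ‖I‖ₑ) ^ 2
      ≤ (ENNReal.ofReal (r ^ p) * (ENNReal.ofReal (A * r ^ (-p)) * ∫⁻ s in Set.Ioi (0:ℝ),
        (ENNReal.ofReal (s ^ (1/2:ℝ)) * ‖φ s‖ₑ) * auxG n s)) ^ 2 := by gcongr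
    _ = ENNReal.ofReal (A ^ 2) * (∫⁻ s in Set.Ioi (0:ℝ),
        (ENNReal.ofReal (s ^ (1/2:ℝ)) * ‖φ s‖ₑ) * auxG n s) ^ 2 := by
        rw [← mul_assoc, ← ENNReal.ofReal_mul (by positivity), mul_pow,
          ← ENNReal.ofReal_pow (by positivity)]
        congr 3
        rw [Real.rpow_neg hr.le]
        field_simp
    _ ≤ ENNReal.ofReal (A ^ 2) * ((∫⁻ s in Set.Ioi (0:ℝ), ENNReal.ofReal s * ‖φ s‖ₑ ^ 2) *
          ∫⁻ s in Set.Ioi (0:ℝ), auxG n s ^ 2) := by gcongr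
    _ = _ := by ring

theorem stmt9_final {n : ℕ} (ψ : EuclideanSpace ℝ (Fin n) × ℝ → ℂ)
    (hi : IntegrableOn (fun p => ‖ψ p‖ ^ 2 * p.2) {p | 0 < p.2}) :
    ∫⁻ s in Set.Ioi (0:ℝ), ENNReal.ofReal s * (∫⁻ x, ‖ψ (x, s)‖ₑ ^ 2)
      = ENNReal.ofReal (∫ p in {p : EuclideanSpace ℝ (Fin n) × ℝ | 0 < p.2}, ‖ψ p‖ ^ 2 * p.2) := by
  have hset : {p : EuclideanSpace ℝ (Fin n) × ℝ | 0 < p.2} = Set.univ ×ˢ Set.Ioi 0 := by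
    ext p; simp
  have hS : MeasurableSet {p : EuclideanSpace ℝ (Fin n) × ℝ | 0 < p.2} :=
    measurableSet_lt measurable_const measurable_snd
  rw [ofReal_integral_eq_lintegral_ofReal hi
    ((ae_restrict_iff' hS).2 (Filter.Eventually.of_forall fun p hp => by
      have : 0 < p.2 := hp
      simp only [Pi.zero_apply]; positivity))]
  have hr : (volume : Measure (EuclideanSpace ℝ (Fin n) × ℝ)).restrict {p | 0 < p.2}
      = (volume : Measure (EuclideanSpace ℝ (Fin n))).prod (volume.restrict (Set.Ioi 0)) := by
    rw [hset, Measure.volume_eq_prod, ← Measure.prod_restrict, Measure.restrict_univ]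
  unfold IntegrableOn at hi
  rw [hr] at hi ⊢
  rw [lintegral_prod_symm _ hi.1.aemeasurable.ennreal_ofReal]
  apply setLIntegral_congr_fun measurableSet_Ioi
  intro s hs
  have hs : 0 < s := hs
  dsimp only
  rw [← lintegral_const_mul' _ _ ENNReal.ofReal_ne_top]
  congr 1
  ext x
  rw [ENNReal.ofReal_mul (by positivity), ENNReal.ofReal_pow (by positivity),
    ofReal_norm, mul_comm]

/-- For `ψ ∈ L²(Ω, z dμ)` supported in `ℝⁿ × (0,1]`, the function `μ` with Fourier
transform `μ̂(ξ) = |ξ|^{1/(n−1)} λ̂(ξ)`, where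
`λ̂(ξ) = |ξ|² ∫₀^∞ s ψ̂(ξ,s) u₁(s |ξ|^{1/α_n}) ds`, lies in `L²(ℝⁿ)` with
`‖μ‖_{L²} ≤ C ‖ψ‖_{L²(Ω, z dμ)}`; consequently `λ ∈ H^{1/(n−1)}(ℝⁿ)`. -/
theorem stmt9 (n : ℕ) (hn : 2 ≤ n) :
    ∃ C > (0 : ℝ), ∀ ψ ψhat : EuclideanSpace ℝ (Fin n) × ℝ → ℂ,
      (∀ s : ℝ, (fun ξ => ψhat (ξ, s)) = 𝓕 (fun x => ψ (x, s))) →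
      (∀ (x : EuclideanSpace ℝ (Fin n)) (s : ℝ), s ∉ Set.Ioc (0 : ℝ) 1 → ψ (x, s) = 0) →
      IntegrableOn (fun p => ‖ψ p‖ ^ 2 * p.2) {p | 0 < p.2} →
      (∫⁻ ξ : EuclideanSpace ℝ (Fin n),
          ENNReal.ofReal
            (‖((‖ξ‖ ^ ((1 : ℝ) / (n - 1)) : ℝ) : ℂ) * (‖ξ‖ ^ 2 : ℂ) * ∫ s in Set.Ioi (0 : ℝ),
                (s : ℂ) * ψhat (ξ, s) * (taubU1 n (s * ‖ξ‖ ^ ((1 : ℝ) / alphaN n)) : ℝ)‖ ^ 2))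
        ≤ ENNReal.ofReal
            (C * ∫ p in {p : EuclideanSpace ℝ (Fin n) × ℝ | 0 < p.2}, ‖ψ p‖ ^ 2 * p.2) := by
  obtain ⟨A, hA, hu⟩ := aux_u hn
  set K := ∫⁻ s in Set.Ioi (0:ℝ), auxG n s ^ 2 with hK
  have hKt : K ≠ ⊤ := auxG_fin hn
  refine ⟨A ^ 2 * K.toReal + 1, by positivity, ?_⟩
  intro ψ ψhat hhat hsupp hi
  have hh : ∀ ξ s, ψhat (ξ, s) = 𝓕 (fun x => ψ (x, s)) ξ := fun ξ s => congrFun (hhat s) ξ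
  have hfin := stmt9_final ψ hi
  obtain ⟨g, hgm, hgF, hgi⟩ := exists_measurable_le_lintegral_eq
    (μ := (volume : Measure (EuclideanSpace ℝ (Fin n)))) (fun ξ => ENNReal.ofReal
            (‖((‖ξ‖ ^ ((1 : ℝ) / (n - 1)) : ℝ) : ℂ) * (‖ξ‖ ^ 2 : ℂ) * ∫ s in Set.Ioi (0 : ℝ),
                (s : ℂ) * ψhat (ξ, s) * (taubU1 n (s * ‖ξ‖ ^ ((1 : ℝ) / alphaN n)) : ℝ)‖ ^ 2))
  rw [hgi]
  set E := Function.support g with hE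
  have hEm : MeasurableSet E := measurableSet_support hgm
  have hEξ : ∀ ξ ∈ E, 0 < ‖ξ‖ ∧
      AEMeasurable (fun s => ψhat (ξ, s)) (volume.restrict (Set.Ioi 0)) := by
    intro ξ hξ
    have hF : ENNReal.ofReal
            (‖((‖ξ‖ ^ ((1 : ℝ) / (n - 1)) : ℝ) : ℂ) * (‖ξ‖ ^ 2 : ℂ) * ∫ s in Set.Ioi (0 : ℝ),
                (s : ℂ) * ψhat (ξ, s) * (taubU1 n (s * ‖ξ‖ ^ ((1 : ℝ) / alphaN n)) : ℝ)‖ ^ 2)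
          ≠ 0 := by
      intro h0
      have := hgF ξ
      dsimp only at this
      rw [h0] at this
      exact hξ (le_antisymm this zero_le)
    have hpos : 0 < ‖ξ‖ := by
      rw [norm_pos_iff]
      rintro rfl
      apply hF
      simp
    refine ⟨hpos, ?_⟩
    have hint : Integrable (fun s : ℝ => (s : ℂ) * ψhat (ξ, s) *
        (taubU1 n (s * ‖ξ‖ ^ ((1 : ℝ) / alphaN n)) : ℝ)) (volume.restrict (Set.Ioi 0)) := by
      by_contra hni
      apply hF
      rw [integral_undef hni]
      simp
    have hm1 : Measurable fun s : ℝ =>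
        ((s : ℂ) * ((taubU1 n (s * ‖ξ‖ ^ ((1 : ℝ) / alphaN n)) : ℝ) : ℂ)) :=
      Complex.measurable_ofReal.mul (Complex.measurable_ofReal.comp (aux_u_meas ‖ξ‖))
    refine (hint.1.aemeasurable.div hm1.aemeasurable).congr ?_
    refine (ae_restrict_iff' measurableSet_Ioi).2 (Filter.Eventually.of_forall fun s hs => ?_)
    have hs : 0 < s := hs
    have h1 : (s : ℂ) ≠ 0 := by exact_mod_cast hs.ne'
    have h2 : ((taubU1 n (s * ‖ξ‖ ^ ((1 : ℝ) / alphaN n)) : ℝ) : ℂ) ≠ 0 := by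
      exact_mod_cast (hu _ hpos s hs).1.ne'
    simp only [Pi.div_apply]
    field_simp
  have hzero : ∀ ξ s, 1 < s → ψhat (ξ, s) = 0 := by
    intro ξ s hs
    rw [hh, Real.fourier_eq]
    have : ∀ x, ψ (x, s) = 0 := fun x => hsupp x s (fun h => absurd h.2 (not_le.2 hs))
    simp [this]
  have hc : ∀ s, Continuous fun ξ => ψhat (ξ, s) := by
    intro s; rw [hhat s]; exact aux_fourier_cont _
  calc ∫⁻ ξ, g ξ = ∫⁻ ξ in E, g ξ := by
          rw [← lintegral_indicator hEm, hE, Set.indicator_support]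
    _ ≤ ∫⁻ ξ in E, ENNReal.ofReal (A ^ 2) * K *
        ∫⁻ s in Set.Ioi (0:ℝ), ENNReal.ofReal s * ‖ψhat (ξ, s)‖ₑ ^ 2 := by
        apply setLIntegral_mono_ae' hEm
        refine Filter.Eventually.of_forall fun ξ hξ => (hgF ξ).trans ?_
        exact stmt9_point hn hA hu (hEξ ξ hξ).1 (fun s => ψhat (ξ, s)) (hzero ξ) (hEξ ξ hξ).2
    _ = ENNReal.ofReal (A ^ 2) * K * ∫⁻ ξ in E,
        ∫⁻ s in Set.Ioi (0:ℝ), ENNReal.ofReal s * ‖ψhat (ξ, s)‖ₑ ^ 2 :=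
        lintegral_const_mul' _ _ (ENNReal.mul_ne_top ENNReal.ofReal_ne_top hKt)
    _ ≤ ENNReal.ofReal (A ^ 2) * K * ∫⁻ s in Set.Ioi (0:ℝ),
        ENNReal.ofReal s * ∫⁻ ξ, ‖ψhat (ξ, s)‖ₑ ^ 2 := by
        gcongr
        exact aux_tonelli E hEm (volume.restrict (Set.Ioi 0)) (fun ξ s => ψhat (ξ, s)) hc
          (fun ξ hξ => (hEξ ξ hξ).2) ENNReal.ofReal ENNReal.measurable_ofReal
          (fun _ => ENNReal.ofReal_ne_top)
    _ ≤ ENNReal.ofReal (A ^ 2) * K * ∫⁻ s in Set.Ioi (0:ℝ),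
        ENNReal.ofReal s * ∫⁻ x, ‖ψ (x, s)‖ₑ ^ 2 := by
        refine mul_le_mul_right (lintegral_mono fun s => mul_le_mul_right ?_ _) _
        simp only [hh]
        exact aux_plancherel _
    _ ≤ _ := by
        rw [hfin, ENNReal.ofReal_mul (by positivity)]
        gcongr
        rw [← ENNReal.ofReal_toReal hKt, ← ENNReal.ofReal_mul (by positivity)]
        rw [ENNReal.toReal_ofReal (by positivity)]
        apply ENNReal.ofReal_le_ofReal
        linarith
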